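/- Suppose τ, σ, σ/τ ∈ H. Then there exist complex coefficients c_0, c_1, c_2, c_3 (rational functions of τ and σ with rational coefficients) such that, with Q(z) = c_3 z^3 + c_2 z^2 + c_1 z + c_0, the identity Γ(z/τ, −1/τ, σ/τ) = e^{iπ Q(z)} · Γ((z−τ)/σ, −τ/σ, −1/σ) · Γ(z, τ, σ) holds for all z ∈ ℂ for which all factors are nonzero. -/

import Mathlib

open Complex Filter Topology

/-- The open upper half-plane as a subset of `ℂ`. -/
def UHP : Set ℂ := {z : ℂ | 0 < z.im}

/-- `qexp τ = e^{2πiτ}`. -/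
noncomputable def qexp (τ : ℂ) : ℂ := Complex.exp (2 * Real.pi * Complex.I * τ)

/-- Elliptic zeta values `Z_k(τ,σ)`. -/
noncomputable def ellipticZeta (k : ℕ) (τ σ : ℂ) : ℂ :=
  -((2 * (Real.pi : ℂ) * Complex.I) ^ k / (Nat.factorial (k - 1) : ℂ)) *
    ∑' j : ℕ+, (j : ℂ) ^ (k - 1) *
      (qexp τ ^ (j : ℕ) - (-1 : ℂ) ^ k * qexp σ ^ (j : ℕ)) /
      ((1 - qexp τ ^ (j : ℕ)) * (1 - qexp σ ^ (j : ℕ)))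

/-- `D_k(q)`: the normalized generating function of sums of `(k-1)`-st powers of divisors. -/
noncomputable def Dk (k : ℕ) (q : ℂ) : ℂ :=
  ((-2 * (Real.pi : ℂ) * Complex.I) ^ k / (Nat.factorial (k - 1) : ℂ)) *
    ∑' n : ℕ+, (∑ d ∈ Nat.divisors (n : ℕ), (d : ℂ) ^ (k - 1)) * q ^ (n : ℕ)

/-- Ruijsenaars's elliptic gamma function. -/
noncomputable def ellipticGamma (z τ σ : ℂ) : ℂ :=
  ∏' p : ℕ × ℕ,
    (1 - qexp τ ^ (p.1 + 1) * qexp σ ^ (p.2 + 1) * Complex.exp (-(2 * Real.pi * Complex.I) * z)) /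
    (1 - qexp τ ^ p.1 * qexp σ ^ p.2 * Complex.exp (2 * Real.pi * Complex.I * z))

/-- The modified theta function `θ₀(z,τ)`. -/
noncomputable def theta0 (z τ : ℂ) : ℂ :=
  ∏' j : ℕ, (1 - qexp τ ^ (j + 1) * Complex.exp (-(2 * Real.pi * Complex.I) * z)) *
            (1 - qexp τ ^ j * Complex.exp (2 * Real.pi * Complex.I * z))

/-- A modular form of weight `k` for `SL(2,ℤ)`: a holomorphic function on the
upper half-plane transforming with weight `k` under `SL(2,ℤ)` and bounded as `Im τ → ∞`. -/
def IsModularForm (k : ℕ) (G : ℂ → ℂ) : Prop :=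
  DifferentiableOn ℂ G UHP ∧
  (∀ A : Matrix.SpecialLinearGroup (Fin 2) ℤ, ∀ τ ∈ UHP,
      G (((A 0 0 : ℤ) * τ + (A 0 1 : ℤ)) / ((A 1 0 : ℤ) * τ + (A 1 1 : ℤ))) =
        ((A 1 0 : ℤ) * τ + (A 1 1 : ℤ)) ^ k * G τ) ∧
  (∃ C : ℝ, ∀ τ ∈ UHP, 1 ≤ τ.im → ‖G τ‖ ≤ C)

/-- All factors in the defining double product of the elliptic gamma function are nonzero. -/
def EGFactorsNeZero (z τ σ : ℂ) : Prop :=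
  ∀ j ℓ : ℕ,
    (1 - qexp τ ^ (j + 1) * qexp σ ^ (ℓ + 1) * Complex.exp (-(2 * Real.pi * Complex.I) * z)) ≠ 0 ∧
    (1 - qexp τ ^ j * qexp σ ^ ℓ * Complex.exp (2 * Real.pi * Complex.I * z)) ≠ 0

/-!
Each elliptic gamma function is a quotient of two double `q`-Pochhammer products, so clearing
denominators turns the relation into `N(z) = e^{πi Q(z)} D(z)` with `N`, `D` entire, each a product
of three factors, and `N(z) = D(τ + σ - 1 - z)`. Counting zeros as points of `ℤ³` shows that `N` and
`D` vanish to the same order everywhere. Under `z ↦ z + σ` and `z ↦ z + τ` the quotient `N / D` is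
multiplied by `θ₀(z/τ, -1/τ) / θ₀(z, τ)` and `θ₀(z/σ, -1/σ) / θ₀(z, σ)`, which the modular
transformation of `θ₀` identifies with the multipliers of `e^{πi Q}`. Hence `N = C e^{πi Q} D` by
Liouville's theorem on `ℂ / (ℤτ + ℤσ)`. The order of `D` at the centre `(τ + σ - 1) / 2` of the
reflection is even, because the reflection of `ℤ³` acts freely on the zeros there, so comparing
leading coefficients at the centre gives `C = 1`.
-/

section QExp

lemma qexp_add (a b : ℂ) : qexp (a + b) = qexp a * qexp b := by
  simp only [qexp, ← Complex.exp_add, mul_add]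

lemma qexp_zero : qexp 0 = 1 := by simp [qexp]

lemma qexp_ne_zero (a : ℂ) : qexp a ≠ 0 := Complex.exp_ne_zero _

lemma qexp_natCast_mul (n : ℕ) (a : ℂ) : qexp (n * a) = qexp a ^ n := by
  simp only [qexp, ← Complex.exp_nat_mul, mul_left_comm]

lemma qexp_eq_one_iff (a : ℂ) : qexp a = 1 ↔ ∃ n : ℤ, a = n := by
  simp only [qexp, Complex.exp_eq_one_iff, mul_comm _ (2 * Real.pi * I : ℂ),
    mul_right_inj' two_pi_I_ne_zero]

lemma qexp_one : qexp 1 = 1 := (qexp_eq_one_iff 1).2 ⟨1, by simp⟩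

lemma qexp_add_one (a : ℂ) : qexp (a + 1) = qexp a := by rw [qexp_add, qexp_one, mul_one]

lemma qexp_half : qexp (1 / 2) = -1 := by
  rw [qexp, ← exp_pi_mul_I]
  congr 1
  ring

lemma norm_qexp_lt_one {t : ℂ} (ht : t ∈ UHP) : ‖qexp t‖ < 1 :=
  UpperHalfPlane.norm_exp_two_pi_I_lt_one ⟨t, ht⟩

@[fun_prop]
lemma differentiable_qexp : Differentiable ℂ qexp := by
  unfold qexp
  fun_prop

@[fun_prop]
lemma continuous_qexp : Continuous qexp := differentiable_qexp.continuous

lemma hasDerivAt_qexp (z : ℂ) : HasDerivAt qexp (2 * Real.pi * I * qexp z) z := by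
  have h := ((hasDerivAt_id z).const_mul (2 * Real.pi * I : ℂ)).cexp
  rwa [id_eq, mul_one, mul_comm (Complex.exp _)] at h

end QExp

section EntireFunctions

lemma analyticOrderAt_comp_const_sub (f : ℂ → ℂ) (c z : ℂ) :
    analyticOrderAt (fun z => f (c - z)) z = analyticOrderAt f (c - z) :=
  analyticOrderAt_comp_of_deriv_ne_zero (f := f) (by fun_prop) (by simp)

lemma analyticOrderAt_comp_div_const (f : ℂ → ℂ) {c : ℂ} (hc : c ≠ 0) (z : ℂ) :
    analyticOrderAt (fun z => f (z / c)) z = analyticOrderAt f (z / c) :=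
  analyticOrderAt_comp_of_deriv_ne_zero (f := f) (by fun_prop) (by simp [hc])

lemma exists_entire_mul_of_analyticOrderAt_eq {f g : ℂ → ℂ} (hf : Differentiable ℂ f)
    (hg : Differentiable ℂ g) (hord : ∀ z, analyticOrderAt f z = analyticOrderAt g z)
    (hfin : ∀ z, analyticOrderAt g z ≠ ⊤) :
    ∃ u : ℂ → ℂ, Differentiable ℂ u ∧ f = u * g := by
  have hfg : MeromorphicOn (f / g) Set.univ := fun z _ =>
    (hf.analyticAt z).meromorphicAt.div (hg.analyticAt z).meromorphicAt
  set u := toMeromorphicNFOn (f / g) Set.univ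
  have hu z : MeromorphicNFAt u z := meromorphicNFOn_toMeromorphicNFOn _ _ (Set.mem_univ z)
  have hu_ord z : meromorphicOrderAt u z = 0 := by
    rw [meromorphicOrderAt_toMeromorphicNFOn hfg (Set.mem_univ z),
      meromorphicOrderAt_div (hf.analyticAt z).meromorphicAt (hg.analyticAt z).meromorphicAt,
      (hf.analyticAt z).meromorphicOrderAt_eq, (hg.analyticAt z).meromorphicOrderAt_eq, hord]
    lift analyticOrderAt g z to ℕ using hfin z with n
    simp
  have hu_an z : AnalyticAt ℂ u z :=
    (hu z).meromorphicOrderAt_nonneg_iff_analyticAt.1 (hu_ord z).ge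
  refine ⟨u, fun z => (hu_an z).differentiableAt, funext fun z => ?_⟩
  have hg_ne : ∀ᶠ w in 𝓝[≠] z, g w ≠ 0 :=
    (hg.analyticAt z).eventually_eq_zero_or_eventually_ne_zero.resolve_left
      fun h => hfin z (analyticOrderAt_eq_top.2 h)
  have hnear : f =ᶠ[𝓝[≠] z] u * g := by
    filter_upwards [hg_ne, hfg.toMeromorphicNFOn_eq_self_on_nhdsNE (Set.mem_univ z)] with w hw hq
    rw [Pi.mul_apply, show u w = _ from hq, Pi.div_apply, div_mul_cancel₀ _ hw]
  exact ((hf z).continuousAt.eventuallyEq_nhds_iff_eventuallyEq_nhdsNE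
    ((hu_an z).continuousAt.mul (hg z).continuousAt)).1 hnear |>.eq_of_nhds

lemma eq_of_entire_of_doublyPeriodic (L : PeriodPair) {f : ℂ → ℂ} (hf : Differentiable ℂ f)
    (h₁ : Function.Periodic f L.ω₁) (h₂ : Function.Periodic f L.ω₂) (z w : ℂ) : f z = f w := by
  refine hf.apply_eq_apply_of_bounded
    (IsZLattice.isCompact_range_of_periodic L.lattice f hf.continuous
      fun z ω hω => ?_).isBounded z w
  obtain ⟨m, n, rfl⟩ := PeriodPair.mem_lattice.1 hω
  simpa only [add_assoc] using ((h₁.int_mul m).add_period (h₂.int_mul n)) z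

lemma eq_const_mul_qexp_mul_of_analyticOrderAt_eq (L : PeriodPair) {f g Q : ℂ → ℂ}
    (hf : Differentiable ℂ f) (hg : Differentiable ℂ g) (hQ : Differentiable ℂ Q)
    (hord : ∀ z, analyticOrderAt f z = analyticOrderAt g z)
    (hfin : ∀ z, analyticOrderAt g z ≠ ⊤)
    (hper : ∀ ω ∈ ({L.ω₁, L.ω₂} : Set ℂ), ∀ z,
      f (z + ω) * g z = qexp (Q (z + ω) - Q z) * f z * g (z + ω)) :
    ∃ C : ℂ, ∀ z, f z = C * qexp (Q z) * g z := by
  obtain ⟨u, hu, rfl⟩ := exists_entire_mul_of_analyticOrderAt_eq hf hg hord hfin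
  have hg0 (d : ℂ) : ¬ ∀ z ∈ Set.univ, g (z + d) = 0 := fun h =>
    hfin 0 (analyticOrderAt_eq_top.2 (.of_forall fun z => by simpa using h (z - d) trivial))
  have hperiodic : ∀ ω ∈ ({L.ω₁, L.ω₂} : Set ℂ),
      Function.Periodic (fun z => u z * qexp (-Q z)) ω := by
    intro ω hω z
    set p : ℂ → ℂ := fun z => u (z + ω) * qexp (-Q (z + ω)) - u z * qexp (-Q z)
    have hp : ∀ z ∈ Set.univ, p z * (g (z + 0) * g (z + ω)) = 0 := by
      intro z _
      have hQ : qexp (Q (z + ω) - Q z) * qexp (-Q (z + ω)) = qexp (-Q z) := by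
        rw [← qexp_add]
        ring_nf
      have hz := hper ω hω z
      simp only [Pi.mul_apply] at hz
      simp only [p, add_zero]
      linear_combination qexp (-Q (z + ω)) * hz + u z * g z * g (z + ω) * hQ
    have han {f : ℂ → ℂ} (hf : Differentiable ℂ f) : AnalyticOnNhd ℂ f Set.univ :=
      fun z _ => hf.analyticAt z
    refine sub_eq_zero.1 (((han (by fun_prop)).eq_zero_or_eq_zero_of_mul_eq_zero
      (han (by fun_prop)) hp isPreconnected_univ).resolve_right (fun h => ?_) z trivial)
    exact ((han (by fun_prop)).eq_zero_or_eq_zero_of_mul_eq_zero (han (by fun_prop)) h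
      isPreconnected_univ).elim (hg0 0) (hg0 ω)
  refine ⟨u 0 * qexp (-Q 0), fun z => ?_⟩
  rw [eq_of_entire_of_doublyPeriodic L (by fun_prop) (hperiodic _ (by simp))
    (hperiodic _ (by simp)) 0 z, mul_assoc (u z), ← qexp_add, neg_add_cancel, qexp_zero, mul_one,
    Pi.mul_apply]

end EntireFunctions

section EvenOrder

lemma eq_one_of_reflect_eq_mul_of_even_analyticOrderAt {f h : ℂ → ℂ} {c : ℂ} {n : ℕ}
    (hf : AnalyticAt ℂ f c) (hord : analyticOrderAt f c = n) (hn : Even n)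
    (hh : ContinuousAt h c) (hfh : ∀ z, f (2 * c - z) = h z * f z) : h c = 1 := by
  obtain ⟨g, hg, hg0, hfg⟩ := hf.analyticOrderAt_eq_natCast.1 hord
  have hreflect : Tendsto (fun z => 2 * c - z) (𝓝 c) (𝓝 c) :=
    Continuous.tendsto' (by fun_prop) _ _ (by ring)
  have hg_reflect : ∀ᶠ z in 𝓝[≠] c, g (2 * c - z) = h z * g z := by
    filter_upwards [nhdsWithin_le_nhds hfg, nhdsWithin_le_nhds (hreflect.eventually hfg),
      self_mem_nhdsWithin] with z hz hz' hzc
    have hpow : (2 * c - z - c) ^ n = (z - c) ^ n := by rw [← hn.neg_pow (z - c)]; ring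
    have key := hfh z
    rw [hz, hz', hpow, smul_eq_mul, smul_eq_mul, mul_left_comm] at key
    exact mul_left_cancel₀ (pow_ne_zero n (sub_ne_zero.2 hzc)) key
  have hlim := tendsto_nhds_unique
    (((hg.continuousAt.tendsto.comp hreflect).mono_left nhdsWithin_le_nhds).congr' hg_reflect)
    ((hh.mul hg.continuousAt).tendsto.mono_left nhdsWithin_le_nhds)
  exact mul_right_cancel₀ hg0 (by rw [one_mul]; exact hlim.symm)

end EvenOrder

section QExpProd

lemma analyticOrderAt_finsetProd {𝕜 ι : Type*} [NontriviallyNormedField 𝕜] {z : 𝕜} (s : Finset ι)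
    {f : ι → 𝕜 → 𝕜} (hf : ∀ i ∈ s, AnalyticAt 𝕜 (f i) z) :
    analyticOrderAt (∏ i ∈ s, f i) z = ∑ i ∈ s, analyticOrderAt (f i) z := by
  classical
  induction s using Finset.induction_on with
  | empty =>
    rw [Finset.prod_empty, Finset.sum_empty]
    exact (analyticAt_const (v := (1 : 𝕜))).analyticOrderAt_eq_zero.2 one_ne_zero
  | insert a s ha ih =>
    rw [Finset.forall_mem_insert] at hf
    rw [Finset.prod_insert ha, Finset.sum_insert ha,
      analyticOrderAt_mul hf.1 (Finset.analyticAt_prod s hf.2), ih hf.2]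

/-- The infinite product `∏ᵢ (1 - e^{2πi(αᵢ + w)})`, the common form of theta functions and of the
numerator and denominator of the elliptic gamma function. -/
noncomputable def qexpProd {ι : Type*} (α : ι → ℂ) (w : ℂ) : ℂ := ∏' i, (1 - qexp (α i + w))

variable {ι : Type*} {α : ι → ℂ}

lemma qexpProd_add_one (α : ι → ℂ) (w : ℂ) : qexpProd α (w + 1) = qexpProd α w := by
  simp only [qexpProd, ← add_assoc, qexp_add_one]

lemma summable_norm_qexp_add (h : Summable fun i => ‖qexp (α i)‖) (w : ℂ) :
    Summable fun i => ‖-qexp (α i + w)‖ := by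
  simpa only [norm_neg, qexp_add, norm_mul] using h.mul_right ‖qexp w‖

lemma multipliable_one_sub_qexp (h : Summable fun i => ‖qexp (α i)‖) (w : ℂ) :
    Multipliable fun i => 1 - qexp (α i + w) := by
  simpa [sub_eq_add_neg] using multipliable_one_add_of_summable (summable_norm_qexp_add h w)

lemma qexpProd_ne_zero (h : Summable fun i => ‖qexp (α i)‖) {w : ℂ}
    (hw : ∀ i, qexp (α i + w) ≠ 1) : qexpProd α w ≠ 0 := by
  simpa [qexpProd, sub_eq_add_neg] using tprod_one_add_ne_zero_of_summable
    (f := fun i => -qexp (α i + w))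
    (fun i => by simpa [← sub_eq_add_neg, sub_eq_zero] using (hw i).symm)
    (summable_norm_qexp_add h w)

lemma differentiable_qexpProd (h : Summable fun i => ‖qexp (α i)‖) :
    Differentiable ℂ (qexpProd α) := by
  intro w₀
  obtain ⟨C, hC⟩ := (isCompact_closedBall w₀ 1).exists_bound_of_continuousOn
    (f := qexp) continuous_qexp.continuousOn
  have hconv := Summable.hasProdLocallyUniformlyOn_one_add (f := fun i w => -qexp (α i + w))
    (K := Metric.ball w₀ 1) Metric.isOpen_ball (h.mul_right C)
    (.of_forall fun i w hw => by
      rw [norm_neg, qexp_add, norm_mul]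
      gcongr
      exact hC w (Metric.ball_subset_closedBall hw))
    (fun i => by fun_prop)
  have hdiff := hconv.differentiableOn (.of_forall fun s => by
    simpa [Finset.prod_fn] using DifferentiableOn.finsetProd (fun _ _ ↦ by fun_prop))
    Metric.isOpen_ball
  simp only [← sub_eq_add_neg] at hdiff
  exact hdiff.differentiableAt (Metric.ball_mem_nhds w₀ one_pos)

lemma finite_setOf_qexp_add_eq_one (h : Summable fun i => ‖qexp (α i)‖) (w : ℂ) :
    {i | qexp (α i + w) = 1}.Finite := by
  have hsmall := (summable_norm_qexp_add h w).tendsto_cofinite_zero.eventually (gt_mem_nhds one_pos)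
  refine (eventually_cofinite.1 hsmall).subset fun i hi => ?_
  simp_all

lemma analyticOrderAt_one_sub_qexp {a w : ℂ} (h : qexp (a + w) = 1) :
    analyticOrderAt (fun z => 1 - qexp (a + z)) w = 1 := by
  have hderiv := ((hasDerivAt_qexp (a + w)).comp_const_add a w).const_sub 1
  refine AnalyticAt.analyticOrderAt_eq_one_of_zero_deriv_ne_zero
    ((by fun_prop : Differentiable ℂ fun z => 1 - qexp (a + z)).analyticAt w) (by simp [h]) ?_
  simp [hderiv.deriv, h, Real.pi_ne_zero]

lemma analyticOrderAt_qexpProd_eq_encard_index (h : Summable fun i => ‖qexp (α i)‖) (w : ℂ) :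
    analyticOrderAt (qexpProd α) w = {i | qexp (α i + w) = 1}.encard := by
  set s := (finite_setOf_qexp_add_eq_one h w).toFinset with hs
  have hsum : Summable fun i : ↥((s : Set ι)ᶜ) => ‖qexp (α i)‖ := h.subtype _
  have hfactor : qexpProd α = (∏ i ∈ s, fun z => 1 - qexp (α i + z)) *
      qexpProd fun i : ↥((s : Set ι)ᶜ) => α i := by
    funext z
    rw [Pi.mul_apply, Finset.prod_apply, qexpProd, qexpProd, ← Finset.tprod_subtype s]
    exact (Multipliable.tprod_mul_tprod_compl (s := (s : Set ι))
      (s.finite_toSet.multipliable fun i => 1 - qexp (α i + z))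
      (multipliable_one_sub_qexp hsum z)).symm
  have hfin : ∀ i ∈ s, AnalyticAt ℂ (fun z => 1 - qexp (α i + z)) w := fun i _ =>
    (by fun_prop : Differentiable ℂ fun z => 1 - qexp (α i + z)).analyticAt w
  have htail := (differentiable_qexpProd hsum).analyticAt w
  have htail0 : qexpProd (fun i : ↥((s : Set ι)ᶜ) => α i) w ≠ 0 :=
    qexpProd_ne_zero hsum fun i hi => i.2 (by simpa [hs] using hi)
  rw [hfactor, analyticOrderAt_mul (Finset.analyticAt_prod s hfin) htail,
    htail.analyticOrderAt_eq_zero.2 htail0, add_zero, analyticOrderAt_finsetProd s hfin,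
    Finset.sum_congr rfl fun i hi => analyticOrderAt_one_sub_qexp (by simpa [hs] using hi)]
  simp [hs, ← Set.encard_coe_eq_coe_finsetCard]

lemma analyticOrderAt_qexpProd (h : Summable fun i => ‖qexp (α i)‖) (w : ℂ) :
    analyticOrderAt (qexpProd α) w = {p : ℤ × ι | α p.2 + w = p.1}.encard := by
  have hinj : Set.InjOn Prod.snd {p : ℤ × ι | α p.2 + w = p.1} := by
    rintro ⟨m, i⟩ (hm : α i + w = m) ⟨n, j⟩ (hn : α j + w = n) (rfl : i = j)
    rw [Int.cast_injective (hm.symm.trans hn)]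
  rw [analyticOrderAt_qexpProd_eq_encard_index h, ← hinj.encard_image]
  congr 1
  ext i
  simp [qexp_eq_one_iff]

lemma analyticOrderAt_qexpProd_ne_top (h : Summable fun i => ‖qexp (α i)‖) (w : ℂ) :
    analyticOrderAt (qexpProd α) w ≠ ⊤ := by
  rw [analyticOrderAt_qexpProd_eq_encard_index h]
  exact (finite_setOf_qexp_add_eq_one h w).encard_lt_top.ne

end QExpProd

section QPochhammer

/-- The infinite `q`-Pochhammer symbol `(e^{2πiw}; e^{2πit})_∞` in additive notation. -/
noncomputable def qPochhammer (t w : ℂ) : ℂ := qexpProd (fun j : ℕ => j * t) w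

/-- The double infinite `q`-Pochhammer symbol `∏_{j,l ≥ 0} (1 - e^{2πi(jt + ls + w)})`. -/
noncomputable def doubleQPochhammer (t s w : ℂ) : ℂ :=
  qexpProd (fun p : ℕ × ℕ => p.1 * t + p.2 * s) w

variable {t s : ℂ}

lemma summable_norm_qexp_natCast_mul (ht : t ∈ UHP) :
    Summable fun j : ℕ => ‖qexp (j * t)‖ := by
  simp only [qexp_natCast_mul, norm_pow]
  exact summable_geometric_of_lt_one (norm_nonneg _) (norm_qexp_lt_one ht)

lemma summable_norm_qexp_natCast_mul_add (ht : t ∈ UHP) (hs : s ∈ UHP) :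
    Summable fun p : ℕ × ℕ => ‖qexp (p.1 * t + p.2 * s)‖ := by
  simp only [qexp_add, norm_mul]
  exact (summable_norm_qexp_natCast_mul ht).mul_of_nonneg (summable_norm_qexp_natCast_mul hs)
    (fun _ => norm_nonneg _) (fun _ => norm_nonneg _)

lemma qPochhammer_add_one (t w : ℂ) : qPochhammer t (w + 1) = qPochhammer t w :=
  qexpProd_add_one _ w

lemma doubleQPochhammer_add_one (t s w : ℂ) :
    doubleQPochhammer t s (w + 1) = doubleQPochhammer t s w :=
  qexpProd_add_one _ w

lemma differentiable_qPochhammer (ht : t ∈ UHP) : Differentiable ℂ (qPochhammer t) :=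
  differentiable_qexpProd (summable_norm_qexp_natCast_mul ht)

lemma differentiable_doubleQPochhammer (ht : t ∈ UHP) (hs : s ∈ UHP) :
    Differentiable ℂ (doubleQPochhammer t s) :=
  differentiable_qexpProd (summable_norm_qexp_natCast_mul_add ht hs)

lemma qPochhammer_eq_mul_add (ht : t ∈ UHP) (w : ℂ) :
    qPochhammer t w = (1 - qexp w) * qPochhammer t (w + t) := by
  have hterm (j : ℕ) : 1 - qexp (j * t + (w + t)) = 1 - qexp ((j + 1 : ℕ) * t + w) := by
    congr 2
    push_cast
    ring
  have hmul := multipliable_one_sub_qexp (summable_norm_qexp_natCast_mul ht) (w + t)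
  simp only [hterm] at hmul
  rw [qPochhammer, qPochhammer, qexpProd, qexpProd, tprod_congr hterm,
    tprod_eq_zero_mul' (f := fun j : ℕ => 1 - qexp (j * t + w)) hmul]
  simp

lemma doubleQPochhammer_comm (t s w : ℂ) :
    doubleQPochhammer t s w = doubleQPochhammer s t w := by
  rw [doubleQPochhammer, doubleQPochhammer, qexpProd, qexpProd, ← (Equiv.prodComm ℕ ℕ).tprod_eq]
  simp [add_comm]

lemma hasProd_qPochhammer (ht : t ∈ UHP) (hs : s ∈ UHP) (w : ℂ) :
    HasProd (fun j : ℕ => qPochhammer s (j * t + w)) (doubleQPochhammer t s w) := by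
  refine (multipliable_one_sub_qexp (summable_norm_qexp_natCast_mul_add ht hs) w).hasProd
    |>.prod_fiberwise fun j => ?_
  simpa only [qPochhammer, qexpProd, add_assoc, add_left_comm (_ * s)] using
    (multipliable_one_sub_qexp (summable_norm_qexp_natCast_mul hs) (j * t + w)).hasProd

lemma doubleQPochhammer_eq_mul_add_left (ht : t ∈ UHP) (hs : s ∈ UHP) (w : ℂ) :
    doubleQPochhammer t s w = qPochhammer s w * doubleQPochhammer t s (w + t) := by
  have htail := hasProd_qPochhammer ht hs (w + t)
  have hterm (j : ℕ) : (j : ℂ) * t + (w + t) = (j + 1 : ℕ) * t + w := by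
    push_cast
    ring
  simp only [hterm] at htail
  simpa using (hasProd_qPochhammer ht hs w).unique
    (HasProd.zero_mul (f := fun j : ℕ => qPochhammer s (j * t + w)) htail)

lemma doubleQPochhammer_eq_mul_add_right (ht : t ∈ UHP) (hs : s ∈ UHP) (w : ℂ) :
    doubleQPochhammer t s w = qPochhammer t w * doubleQPochhammer t s (w + s) := by
  rw [doubleQPochhammer_comm, doubleQPochhammer_eq_mul_add_left hs ht, doubleQPochhammer_comm]

lemma analyticOrderAt_qPochhammer (ht : t ∈ UHP) (w : ℂ) :
    analyticOrderAt (qPochhammer t) w =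
      {x : ℤ × ℤ | 0 ≤ x.2 ∧ x.2 * t + w = x.1}.encard := by
  have hinj : Function.Injective (Prod.map id Nat.cast : ℤ × ℕ → ℤ × ℤ) :=
    Function.injective_id.prodMap Nat.cast_injective
  refine (analyticOrderAt_qexpProd (summable_norm_qexp_natCast_mul ht) w).trans ?_
  rw [← hinj.encard_image]
  congr 1
  ext ⟨n, j⟩
  constructor
  · rintro ⟨⟨n, j⟩, h, ⟨⟩⟩
    simpa using h
  · rintro ⟨hj, h⟩
    lift j to ℕ using hj
    exact ⟨(n, j), by simpa using h, rfl⟩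

lemma analyticOrderAt_doubleQPochhammer (ht : t ∈ UHP) (hs : s ∈ UHP) (w : ℂ) :
    analyticOrderAt (doubleQPochhammer t s) w =
      {x : ℤ × ℤ × ℤ | 0 ≤ x.2.1 ∧ 0 ≤ x.2.2 ∧ x.2.1 * t + x.2.2 * s + w = x.1}.encard := by
  have hinj : Function.Injective
      (Prod.map id (Prod.map Nat.cast Nat.cast) : ℤ × ℕ × ℕ → ℤ × ℤ × ℤ) :=
    Function.injective_id.prodMap (Nat.cast_injective.prodMap Nat.cast_injective)
  refine (analyticOrderAt_qexpProd (summable_norm_qexp_natCast_mul_add ht hs) w).trans ?_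
  rw [← hinj.encard_image]
  congr 1
  ext ⟨n, j, l⟩
  constructor
  · rintro ⟨⟨n, j, l⟩, h, ⟨⟩⟩
    simpa using h
  · rintro ⟨hj, hl, h⟩
    lift j to ℕ using hj
    lift l to ℕ using hl
    exact ⟨(n, j, l), by simpa using h, rfl⟩

lemma analyticOrderAt_qPochhammer_ne_top (ht : t ∈ UHP) (w : ℂ) :
    analyticOrderAt (qPochhammer t) w ≠ ⊤ :=
  analyticOrderAt_qexpProd_ne_top (summable_norm_qexp_natCast_mul ht) w

lemma analyticOrderAt_doubleQPochhammer_ne_top (ht : t ∈ UHP) (hs : s ∈ UHP) (w : ℂ) :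
    analyticOrderAt (doubleQPochhammer t s) w ≠ ⊤ :=
  analyticOrderAt_qexpProd_ne_top (summable_norm_qexp_natCast_mul_add ht hs) w

end QPochhammer

section UpperHalfPlane

lemma ne_zero_of_mem_UHP {t : ℂ} (ht : t ∈ UHP) : t ≠ 0 := by
  rintro rfl
  exact lt_irrefl (0 : ℝ) ht

lemma neg_one_div_mem_UHP {t : ℂ} (ht : t ∈ UHP) : -1 / t ∈ UHP := by
  have h : 0 < t.im / normSq t := div_pos ht (normSq_pos.2 (ne_zero_of_mem_UHP ht))
  simpa [UHP, neg_div] using h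

lemma neg_div_mem_UHP {t s : ℂ} (h : s / t ∈ UHP) : -(t / s) ∈ UHP := by
  simpa only [neg_div, one_div_div] using neg_one_div_mem_UHP h

lemma eta_neg_one_div_sq {t : ℂ} (ht : t ∈ UHP) :
    ModularForm.eta (-1 / t) ^ 2 = -I * t * ModularForm.eta t ^ 2 := by
  have h : ModularForm.eta (-1 / t) = (sqrt I)⁻¹ * (sqrt t * ModularForm.eta t) :=
    ModularForm.eta_comp_eq_csqrt_I_inv ht
  rw [h, mul_pow, mul_pow, inv_pow]
  have hsq (w : ℂ) : sqrt w ^ 2 = w := by simp [sqrt]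
  rw [hsq, hsq, inv_I, mul_assoc]

lemma eta_eq_qexp_mul_qPochhammer (t : ℂ) :
    ModularForm.eta t = qexp (t / 24) * qPochhammer t t := by
  rw [ModularForm.eta, Function.Periodic.qParam, qexp, qPochhammer, qexpProd]
  congr 1
  · push_cast
    ring_nf
  · refine tprod_congr fun n => ?_
    rw [ModularForm.eta_q_eq_cexp, qexp]
    ring_nf

lemma qPochhammer_self_ne_zero {t : ℂ} (ht : t ∈ UHP) : qPochhammer t t ≠ 0 :=
  right_ne_zero_of_mul (eta_eq_qexp_mul_qPochhammer t ▸ ModularForm.eta_ne_zero ht)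

lemma qPochhammer_neg_one_div_sq {t : ℂ} (ht : t ∈ UHP) :
    qPochhammer (-1 / t) (-1 / t) ^ 2 =
      t * qexp ((t + 1 / t) / 12 - 1 / 4) * qPochhammer t t ^ 2 := by
  have h := eta_neg_one_div_sq ht
  have hquarter : qexp (-(1 / 4)) = -I := by
    rw [qexp, show 2 * Real.pi * I * (-(1 / 4)) = -Real.pi / 2 * I by ring,
      exp_neg_pi_div_two_mul_I]
  rw [eta_eq_qexp_mul_qPochhammer, eta_eq_qexp_mul_qPochhammer, mul_pow, mul_pow,
    ← qexp_natCast_mul, ← qexp_natCast_mul] at h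
  apply mul_left_cancel₀ (qexp_ne_zero ((2 : ℕ) * (-1 / t / 24)))
  have hexp : qexp ((2 : ℕ) * (-1 / t / 24)) * qexp ((t + 1 / t) / 12 - 1 / 4) =
      -I * qexp ((2 : ℕ) * (t / 24)) := by
    rw [← hquarter, ← qexp_add, ← qexp_add]
    push_cast
    ring_nf
  linear_combination h - t * qPochhammer t t ^ 2 * hexp

lemma exists_periodPair {ω₁ ω₂ : ℂ} (h : ω₂ / ω₁ ∈ UHP) :
    ∃ L : PeriodPair, L.ω₁ = ω₁ ∧ L.ω₂ = ω₂ := by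
  have hω₁ : ω₁ ≠ 0 := by
    rintro rfl
    simp [UHP] at h
  refine ⟨⟨ω₁, ω₂, LinearIndependent.pair_iff.2 fun a b hab => ?_⟩, rfl, rfl⟩
  have hquot : (a : ℂ) + b * (ω₂ / ω₁) = 0 := by
    field_simp
    simpa [mul_comm ω₁] using hab
  have hb : b = 0 := by
    simpa [(ne_of_gt h : (ω₂ / ω₁).im ≠ 0)] using congrArg Complex.im hquot
  simpa [hb] using hquot

end UpperHalfPlane

section Theta

variable {τ : ℂ}

lemma theta0_eq_mul_qPochhammer (hτ : τ ∈ UHP) (z : ℂ) :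
    theta0 z τ = qPochhammer τ (τ - z) * qPochhammer τ z := by
  have hs := summable_norm_qexp_natCast_mul hτ
  rw [qPochhammer, qPochhammer, qexpProd, qexpProd,
    ← (multipliable_one_sub_qexp hs (τ - z)).tprod_mul (multipliable_one_sub_qexp hs z)]
  refine tprod_congr fun j => ?_
  have hshift : (j : ℂ) * τ + (τ - z) = (j + 1 : ℕ) * τ + -z := by
    push_cast
    ring
  rw [hshift, qexp_add, qexp_add, qexp_natCast_mul, qexp_natCast_mul]
  simp only [qexp, mul_neg, neg_mul]

lemma differentiable_theta0 (hτ : τ ∈ UHP) : Differentiable ℂ (theta0 · τ) := by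
  have h := differentiable_qPochhammer hτ
  simp only [theta0_eq_mul_qPochhammer hτ]
  fun_prop

lemma theta0_add_one (hτ : τ ∈ UHP) (z : ℂ) : theta0 (z + 1) τ = theta0 z τ := by
  rw [theta0_eq_mul_qPochhammer hτ, theta0_eq_mul_qPochhammer hτ, qPochhammer_add_one,
    ← qPochhammer_add_one τ (τ - (z + 1))]
  ring_nf

lemma theta0_add_period (hτ : τ ∈ UHP) (z : ℂ) :
    theta0 (z + τ) τ = -qexp (-z) * theta0 z τ := by
  have hinv : qexp (-z) * qexp z = 1 := by rw [← qexp_add, neg_add_cancel, qexp_zero]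
  rw [theta0_eq_mul_qPochhammer hτ, theta0_eq_mul_qPochhammer hτ, qPochhammer_eq_mul_add hτ z,
    show τ - (z + τ) = -z by ring, qPochhammer_eq_mul_add hτ (-z), neg_add_eq_sub]
  linear_combination (-qPochhammer τ (τ - z) * qPochhammer τ (z + τ)) * hinv

lemma deriv_theta0_zero (hτ : τ ∈ UHP) :
    deriv (theta0 · τ) 0 = -(2 * Real.pi * I) * qPochhammer τ τ ^ 2 := by
  have hfactor (z : ℂ) : theta0 z τ =
      (1 - qexp z) * (qPochhammer τ (z + τ) * qPochhammer τ (τ - z)) := by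
    rw [theta0_eq_mul_qPochhammer hτ, qPochhammer_eq_mul_add hτ z]
    ring
  have hdiff := differentiable_qPochhammer hτ
  have hrest : Differentiable ℂ fun z => qPochhammer τ (z + τ) * qPochhammer τ (τ - z) := by
    fun_prop
  have h := ((hasDerivAt_qexp 0).const_sub 1).mul (hrest 0).hasDerivAt
  simp only [hfactor]
  refine h.deriv.trans ?_
  simp only [qexp_zero, zero_add, sub_zero]
  ring

lemma analyticOrderAt_theta0_eq_add (hτ : τ ∈ UHP) (z : ℂ) :
    analyticOrderAt (theta0 · τ) z =
      analyticOrderAt (qPochhammer τ) (τ - z) + analyticOrderAt (qPochhammer τ) z := by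
  have hdiff := differentiable_qPochhammer hτ
  rw [← analyticOrderAt_comp_const_sub, ← analyticOrderAt_mul
    ((by fun_prop : Differentiable ℂ fun z => qPochhammer τ (τ - z)).analyticAt z)
    (hdiff.analyticAt z)]
  exact congrArg (analyticOrderAt · z) (funext (theta0_eq_mul_qPochhammer hτ))

lemma analyticOrderAt_theta0_ne_top (hτ : τ ∈ UHP) (z : ℂ) :
    analyticOrderAt (theta0 · τ) z ≠ ⊤ := by
  rw [analyticOrderAt_theta0_eq_add hτ]
  exact WithTop.add_ne_top.2
    ⟨analyticOrderAt_qPochhammer_ne_top hτ _, analyticOrderAt_qPochhammer_ne_top hτ _⟩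

lemma analyticOrderAt_theta0 (hτ : τ ∈ UHP) (z : ℂ) :
    analyticOrderAt (theta0 · τ) z = {x : ℤ × ℤ | x.1 + x.2 * τ = z}.encard := by
  set L := {x : ℤ × ℤ | x.1 + x.2 * τ = z}
  have hpos : analyticOrderAt (qPochhammer τ) (τ - z) = (L ∩ {x | 0 < x.2}).encard := by
    have hbij : Function.Bijective fun x : ℤ × ℤ => (-x.1, x.2 - 1) :=
      Function.bijective_iff_has_inverse.2
        ⟨fun x => (-x.1, x.2 + 1), fun x => by simp, fun x => by simp⟩
    rw [analyticOrderAt_qPochhammer hτ, ← Set.encard_preimage_of_bijective hbij]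
    congr 1
    ext ⟨a, b⟩
    simp only [L, Set.mem_preimage, Set.mem_inter_iff, Set.mem_ofPred_eq]
    push_cast
    grind
  have hneg : analyticOrderAt (qPochhammer τ) z = (L \ {x | 0 < x.2}).encard := by
    have hbij : Function.Bijective fun x : ℤ × ℤ => (x.1, -x.2) :=
      Function.bijective_iff_has_inverse.2
        ⟨fun x => (x.1, -x.2), fun x => by simp, fun x => by simp⟩
    rw [analyticOrderAt_qPochhammer hτ, ← Set.encard_preimage_of_bijective hbij]
    congr 1
    ext ⟨a, b⟩
    simp only [L, Set.mem_preimage, Set.mem_sdiff, Set.mem_ofPred_eq]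
    push_cast
    grind
  rw [analyticOrderAt_theta0_eq_add hτ, hpos, hneg, add_comm, Set.encard_sdiff_add_encard_inter]

lemma analyticOrderAt_theta0_div (hτ : τ ∈ UHP) (z : ℂ) :
    analyticOrderAt (fun z => theta0 (z / τ) (-1 / τ)) z = analyticOrderAt (theta0 · τ) z := by
  have hτ0 := ne_zero_of_mem_UHP hτ
  have hbij : Function.Bijective fun x : ℤ × ℤ => (x.2, -x.1) :=
    Function.bijective_iff_has_inverse.2 ⟨fun x => (-x.2, x.1), fun x => by simp, fun x => by simp⟩
  rw [analyticOrderAt_comp_div_const (theta0 · (-1 / τ)) hτ0,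
    analyticOrderAt_theta0 (neg_one_div_mem_UHP hτ), analyticOrderAt_theta0 hτ,
    ← Set.encard_preimage_of_bijective hbij]
  congr 1
  ext ⟨a, b⟩
  simp only [Set.mem_preimage, Set.mem_ofPred_eq]
  push_cast
  field_simp
  rw [add_comm]

lemma theta0_zero (hτ : τ ∈ UHP) : theta0 0 τ = 0 := by
  rw [theta0_eq_mul_qPochhammer hτ, qPochhammer_eq_mul_add hτ 0, qexp_zero, sub_self, zero_mul,
    mul_zero]

/-- Half of the quadratic polynomial `B(z, τ)` for which `θ₀(z/τ, -1/τ) = e^{πi B(z, τ)} θ₀(z, τ)`;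
the factor `1/2` turns `e^{πi B}` into `qexp`. -/
noncomputable def thetaModularExponent (τ z : ℂ) : ℂ :=
  z ^ 2 / (2 * τ) + z / 2 * (1 / τ - 1) + ((τ + 1 / τ) / 12 - 1 / 4)

lemma qexp_thetaModularExponent_add_one (hτ : τ ≠ 0) (z : ℂ) :
    qexp (thetaModularExponent τ (z + 1) - thetaModularExponent τ z) = -qexp ((z + 1) / τ) := by
  rw [neg_eq_neg_one_mul, ← qexp_half, ← qexp_add, ← qexp_add_one (_ - _)]
  congr 1
  simp only [thetaModularExponent]
  field_simp
  ring

lemma qexp_thetaModularExponent_add_period (hτ : τ ≠ 0) (z : ℂ) :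
    qexp (thetaModularExponent τ (z + τ) - thetaModularExponent τ z) = -qexp z := by
  rw [neg_eq_neg_one_mul, ← qexp_half, ← qexp_add]
  congr 1
  simp only [thetaModularExponent]
  field_simp
  ring

lemma exists_theta0_div_neg_one_div_eq_const_mul (hτ : τ ∈ UHP) :
    ∃ C, ∀ z, theta0 (z / τ) (-1 / τ) = C * qexp (thetaModularExponent τ z) * theta0 z τ := by
  have hτ0 := ne_zero_of_mem_UHP hτ
  have hτ' := neg_one_div_mem_UHP hτ
  have hθ := differentiable_theta0 hτ
  have hθ' := differentiable_theta0 hτ'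
  obtain ⟨L, hω₁, hω₂⟩ := exists_periodPair (ω₁ := 1) (ω₂ := τ) (by rwa [div_one])
  refine eq_const_mul_qexp_mul_of_analyticOrderAt_eq L (by fun_prop) hθ
    (by unfold thetaModularExponent; fun_prop) (analyticOrderAt_theta0_div hτ)
    (analyticOrderAt_theta0_ne_top hτ) ?_
  rintro _ (rfl | rfl) z
  · have hstep := theta0_add_period hτ' ((z + 1) / τ)
    rw [← add_div, add_neg_cancel_right] at hstep
    have hinv : qexp ((z + 1) / τ) * qexp (-((z + 1) / τ)) = 1 := by
      rw [← qexp_add, add_neg_cancel, qexp_zero]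
    rw [hω₁, theta0_add_one hτ, qexp_thetaModularExponent_add_one hτ0, hstep]
    linear_combination (-theta0 ((z + 1) / τ) (-1 / τ) * theta0 z τ) * hinv
  · have hinv : qexp z * qexp (-z) = 1 := by rw [← qexp_add, add_neg_cancel, qexp_zero]
    rw [hω₂, add_div, div_self hτ0, theta0_add_one hτ', theta0_add_period hτ,
      qexp_thetaModularExponent_add_period hτ0]
    linear_combination (-theta0 (z / τ) (-1 / τ) * theta0 z τ) * hinv

-- Comparing derivatives at `0` reduces the constant to the transformation law of `η²`.
lemma theta0_div_neg_one_div (hτ : τ ∈ UHP) (z : ℂ) :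
    theta0 (z / τ) (-1 / τ) = qexp (thetaModularExponent τ z) * theta0 z τ := by
  obtain ⟨C, hC⟩ := exists_theta0_div_neg_one_div_eq_const_mul hτ
  have hτ0 := ne_zero_of_mem_UHP hτ
  have hτ' := neg_one_div_mem_UHP hτ
  have hderiv_left : HasDerivAt (fun z => theta0 (z / τ) (-1 / τ))
      (-(2 * Real.pi * I) * qPochhammer (-1 / τ) (-1 / τ) ^ 2 * (1 / τ)) 0 := by
    rw [← deriv_theta0_zero hτ']
    have h := (differentiable_theta0 hτ' (0 / τ)).hasDerivAt
    simpa [Function.comp_def] using h.comp 0 ((hasDerivAt_id (0 : ℂ)).div_const τ)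
  have hderiv_right : HasDerivAt (fun z => C * qexp (thetaModularExponent τ z) * theta0 z τ)
      (C * qexp ((τ + 1 / τ) / 12 - 1 / 4) * (-(2 * Real.pi * I) * qPochhammer τ τ ^ 2)) 0 := by
    have hexp : Differentiable ℂ fun z => C * qexp (thetaModularExponent τ z) := by
      unfold thetaModularExponent
      fun_prop
    have h := (hexp 0).hasDerivAt.mul (differentiable_theta0 hτ 0).hasDerivAt
    simpa [Pi.mul_def, deriv_theta0_zero hτ, theta0_zero hτ, thetaModularExponent] using h
  rw [funext hC] at hderiv_left
  have hconst := hderiv_left.unique hderiv_right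
  rw [qPochhammer_neg_one_div_sq hτ] at hconst
  have hne : -(2 * Real.pi * I) * (qexp ((τ + 1 / τ) / 12 - 1 / 4) * qPochhammer τ τ ^ 2) ≠ 0 :=
    mul_ne_zero (neg_ne_zero.2 two_pi_I_ne_zero)
      (mul_ne_zero (qexp_ne_zero _) (pow_ne_zero 2 (qPochhammer_self_ne_zero hτ)))
  have hC1 : 1 = C := by
    apply mul_right_cancel₀ hne
    field_simp at hconst ⊢
    linear_combination hconst
  rw [hC, ← hC1, one_mul]

end Theta

section ThreeTerm

/-- The entire function of `z` collecting the numerators on the right and the denominator on the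
left of the three-term relation; the other three products are its value at `τ + σ - 1 - z`. -/
noncomputable def threeTermProd (τ σ z : ℂ) : ℂ :=
  doubleQPochhammer (-1 / τ) (σ / τ) (z / τ) *
    doubleQPochhammer (-(τ / σ)) (-1 / σ) ((-1 - z) / σ) * doubleQPochhammer τ σ (τ + σ - z)

/-- Half of the cubic polynomial `Q` of the three-term relation, written so that it is visibly odd
about the centre `(τ + σ - 1) / 2`; the factor `1/2` turns `e^{πi Q}` into `qexp`. -/
noncomputable def threeTermExponent (τ σ z : ℂ) : ℂ :=
  ((z - (τ + σ - 1) / 2) ^ 3 - (τ ^ 2 + σ ^ 2 + 1) / 4 * (z - (τ + σ - 1) / 2)) / (6 * τ * σ)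

/-- The zeros of `threeTermProd τ σ` at `z`, listed with multiplicity as lattice points; the three
alternatives come from its three factors. -/
def threeTermZeros (τ σ z : ℂ) : Set (ℤ × ℤ × ℤ) :=
  {x | x.1 + x.2.1 * τ + x.2.2 * σ = z ∧
    (0 ≤ x.1 ∧ x.2.2 ≤ 0 ∨ x.1 < 0 ∧ x.2.1 ≤ 0 ∨ 0 < x.2.1 ∧ 0 < x.2.2)}

variable {τ σ : ℂ}

lemma threeTermExponent_add_right (hτ : τ ≠ 0) (hσ : σ ≠ 0) (z : ℂ) :
    threeTermExponent τ σ (z + σ) - threeTermExponent τ σ z = thetaModularExponent τ z := by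
  simp only [threeTermExponent, thetaModularExponent]
  field_simp
  ring

lemma threeTermExponent_comm (τ σ z : ℂ) : threeTermExponent τ σ z = threeTermExponent σ τ z := by
  simp only [threeTermExponent]
  ring

lemma threeTermExponent_add_left (hτ : τ ≠ 0) (hσ : σ ≠ 0) (z : ℂ) :
    threeTermExponent τ σ (z + τ) - threeTermExponent τ σ z = thetaModularExponent σ z := by
  simp only [threeTermExponent_comm τ, threeTermExponent_add_right hσ hτ]

lemma exists_threeTermProd_add_right (hτ : τ ∈ UHP) (hσ : σ ∈ UHP) (hστ : σ / τ ∈ UHP) (z : ℂ) :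
    ∃ A, threeTermProd τ σ z = qPochhammer (-1 / τ) (z / τ) * A ∧
      threeTermProd τ σ (z + σ) = qPochhammer τ (τ - z) * A := by
  have hσ0 := ne_zero_of_mem_UHP hσ
  have hstep₁ := doubleQPochhammer_eq_mul_add_right (neg_one_div_mem_UHP hτ) hστ (z / τ)
  have hstep₃ := doubleQPochhammer_eq_mul_add_right hτ hσ (τ - z)
  have hper := doubleQPochhammer_add_one (-(τ / σ)) (-1 / σ) ((-1 - (z + σ)) / σ)
  rw [← add_div] at hstep₁
  rw [sub_add_eq_add_sub] at hstep₃
  rw [show (-1 - (z + σ)) / σ + 1 = (-1 - z) / σ by field_simp; ring] at hper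
  refine ⟨doubleQPochhammer (-1 / τ) (σ / τ) ((z + σ) / τ) *
    doubleQPochhammer (-(τ / σ)) (-1 / σ) ((-1 - z) / σ) *
      doubleQPochhammer τ σ (τ + σ - z), ?_, ?_⟩
  · rw [threeTermProd, hstep₁]
    ring
  · rw [threeTermProd, add_sub_add_right_eq_sub, hstep₃, ← hper]
    ring

lemma exists_threeTermProd_add_left (hτ : τ ∈ UHP) (hσ : σ ∈ UHP) (hστ : σ / τ ∈ UHP) (z : ℂ) :
    ∃ A, threeTermProd τ σ z = qPochhammer (-1 / σ) ((-1 - z) / σ) * A ∧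
      threeTermProd τ σ (z + τ) = qPochhammer σ (σ - z) * A := by
  have hτ0 := ne_zero_of_mem_UHP hτ
  have hstep₂ := doubleQPochhammer_eq_mul_add_left (neg_div_mem_UHP hστ) (neg_one_div_mem_UHP hσ)
    ((-1 - z) / σ)
  have hstep₃ := doubleQPochhammer_eq_mul_add_left hτ hσ (σ - z)
  have hper := doubleQPochhammer_add_one (-1 / τ) (σ / τ) (z / τ)
  rw [← sub_eq_add_neg, ← sub_div, sub_sub] at hstep₂
  rw [sub_add_eq_add_sub, add_comm σ τ] at hstep₃
  rw [div_add_one hτ0] at hper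
  refine ⟨doubleQPochhammer (-1 / τ) (σ / τ) (z / τ) *
    doubleQPochhammer (-(τ / σ)) (-1 / σ) ((-1 - (z + τ)) / σ) *
      doubleQPochhammer τ σ (τ + σ - z), ?_, ?_⟩
  · rw [threeTermProd, hstep₂]
    ring
  · rw [threeTermProd, add_comm z τ, add_sub_add_left_eq_sub, add_comm τ z, hstep₃, hper]
    ring

lemma threeTermProd_reflect_add_right (hτ : τ ∈ UHP) (hσ : σ ∈ UHP) (hστ : σ / τ ∈ UHP) (z : ℂ) :
    threeTermProd τ σ (τ + σ - 1 - (z + σ)) * threeTermProd τ σ z =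
      qexp (threeTermExponent τ σ (z + σ) - threeTermExponent τ σ z) *
        threeTermProd τ σ (τ + σ - 1 - z) * threeTermProd τ σ (z + σ) := by
  have hτ0 := ne_zero_of_mem_UHP hτ
  obtain ⟨A, hA, hA'⟩ := exists_threeTermProd_add_right hτ hσ hστ z
  obtain ⟨B, hB, hB'⟩ := exists_threeTermProd_add_right hτ hσ hστ (τ - 1 - z)
  have hθ := theta0_div_neg_one_div hτ z
  rw [theta0_eq_mul_qPochhammer (neg_one_div_mem_UHP hτ), theta0_eq_mul_qPochhammer hτ] at hθ
  rw [show (τ - 1 - z) / τ = -1 / τ - z / τ + 1 by field_simp; ring,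
    qPochhammer_add_one] at hB
  rw [show τ - (τ - 1 - z) = z + 1 by ring, qPochhammer_add_one] at hB'
  rw [show τ + σ - 1 - (z + σ) = τ - 1 - z by ring, show τ + σ - 1 - z = τ - 1 - z + σ by ring,
    threeTermExponent_add_right hτ0 (ne_zero_of_mem_UHP hσ), hA, hA', hB, hB']
  linear_combination A * B * hθ

lemma threeTermProd_reflect_add_left (hτ : τ ∈ UHP) (hσ : σ ∈ UHP) (hστ : σ / τ ∈ UHP) (z : ℂ) :
    threeTermProd τ σ (τ + σ - 1 - (z + τ)) * threeTermProd τ σ z =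
      qexp (threeTermExponent τ σ (z + τ) - threeTermExponent τ σ z) *
        threeTermProd τ σ (τ + σ - 1 - z) * threeTermProd τ σ (z + τ) := by
  have hσ0 := ne_zero_of_mem_UHP hσ
  obtain ⟨A, hA, hA'⟩ := exists_threeTermProd_add_left hτ hσ hστ z
  obtain ⟨B, hB, hB'⟩ := exists_threeTermProd_add_left hτ hσ hστ (σ - 1 - z)
  have hθ := theta0_div_neg_one_div hσ z
  rw [theta0_eq_mul_qPochhammer (neg_one_div_mem_UHP hσ), theta0_eq_mul_qPochhammer hσ] at hθ
  rw [sub_div] at hA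
  rw [← qPochhammer_add_one, show (-1 - (σ - 1 - z)) / σ + 1 = z / σ by field_simp; ring] at hB
  rw [show σ - (σ - 1 - z) = z + 1 by ring, qPochhammer_add_one] at hB'
  rw [show τ + σ - 1 - (z + τ) = σ - 1 - z by ring, show τ + σ - 1 - z = σ - 1 - z + τ by ring,
    threeTermExponent_add_left (ne_zero_of_mem_UHP hτ) hσ0, hA, hA', hB, hB']
  linear_combination A * B * hθ

lemma differentiable_threeTermProd (hτ : τ ∈ UHP) (hσ : σ ∈ UHP) (hστ : σ / τ ∈ UHP) :
    Differentiable ℂ (threeTermProd τ σ) := by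
  have h₁ := differentiable_doubleQPochhammer (neg_one_div_mem_UHP hτ) hστ
  have h₂ := differentiable_doubleQPochhammer (neg_div_mem_UHP hστ) (neg_one_div_mem_UHP hσ)
  have h₃ := differentiable_doubleQPochhammer hτ hσ
  unfold threeTermProd
  fun_prop

lemma analyticOrderAt_threeTermProd_eq_add (hτ : τ ∈ UHP) (hσ : σ ∈ UHP) (hστ : σ / τ ∈ UHP)
    (z : ℂ) :
    analyticOrderAt (threeTermProd τ σ) z =
      analyticOrderAt (doubleQPochhammer (-1 / τ) (σ / τ)) (z / τ) +
        analyticOrderAt (doubleQPochhammer (-(τ / σ)) (-1 / σ)) ((-1 - z) / σ) +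
        analyticOrderAt (doubleQPochhammer τ σ) (τ + σ - z) := by
  have h₁ := differentiable_doubleQPochhammer (neg_one_div_mem_UHP hτ) hστ
  have h₂ := differentiable_doubleQPochhammer (neg_div_mem_UHP hστ) (neg_one_div_mem_UHP hσ)
  have h₃ := differentiable_doubleQPochhammer hτ hσ
  have han {f : ℂ → ℂ} (hf : Differentiable ℂ f) : AnalyticAt ℂ f z := hf.analyticAt z
  rw [← analyticOrderAt_comp_div_const _ (ne_zero_of_mem_UHP hτ),
    ← analyticOrderAt_comp_div_const _ (ne_zero_of_mem_UHP hσ),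
    ← analyticOrderAt_comp_const_sub _ (-1), ← analyticOrderAt_comp_const_sub _ (τ + σ),
    ← analyticOrderAt_mul (han (by fun_prop)) (han (by fun_prop)),
    ← analyticOrderAt_mul (han (by fun_prop)) (han (by fun_prop))]
  rfl

lemma analyticOrderAt_threeTermProd_ne_top (hτ : τ ∈ UHP) (hσ : σ ∈ UHP) (hστ : σ / τ ∈ UHP)
    (z : ℂ) : analyticOrderAt (threeTermProd τ σ) z ≠ ⊤ := by
  rw [analyticOrderAt_threeTermProd_eq_add hτ hσ hστ]
  exact WithTop.add_ne_top.2 ⟨WithTop.add_ne_top.2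
    ⟨analyticOrderAt_doubleQPochhammer_ne_top (neg_one_div_mem_UHP hτ) hστ _,
      analyticOrderAt_doubleQPochhammer_ne_top (neg_div_mem_UHP hστ) (neg_one_div_mem_UHP hσ) _⟩,
    analyticOrderAt_doubleQPochhammer_ne_top hτ hσ _⟩

lemma analyticOrderAt_doubleQPochhammer_div_left (hτ : τ ∈ UHP) (hστ : σ / τ ∈ UHP) (z : ℂ) :
    analyticOrderAt (doubleQPochhammer (-1 / τ) (σ / τ)) (z / τ) =
      {x : ℤ × ℤ × ℤ | x.1 + x.2.1 * τ + x.2.2 * σ = z ∧ 0 ≤ x.1 ∧ x.2.2 ≤ 0}.encard := by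
  have hτ0 := ne_zero_of_mem_UHP hτ
  have hbij : Function.Bijective fun x : ℤ × ℤ × ℤ => (x.2.1, x.1, -x.2.2) :=
    Function.Involutive.bijective fun x => by simp
  rw [analyticOrderAt_doubleQPochhammer (neg_one_div_mem_UHP hτ) hστ,
    ← Set.encard_preimage_of_bijective hbij]
  congr 1
  ext ⟨a, b, c⟩
  simp only [Set.mem_preimage, Set.mem_ofPred_eq]
  push_cast
  field_simp
  grind

lemma analyticOrderAt_doubleQPochhammer_div_right (hσ : σ ∈ UHP) (hστ : σ / τ ∈ UHP) (z : ℂ) :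
    analyticOrderAt (doubleQPochhammer (-(τ / σ)) (-1 / σ)) ((-1 - z) / σ) =
      {x : ℤ × ℤ × ℤ | x.1 + x.2.1 * τ + x.2.2 * σ = z ∧ x.1 < 0 ∧ x.2.1 ≤ 0}.encard := by
  have hσ0 := ne_zero_of_mem_UHP hσ
  have hbij : Function.Bijective fun x : ℤ × ℤ × ℤ => (-x.2.2, -x.2.1, -x.1 - 1) :=
    Function.bijective_iff_has_inverse.2
      ⟨fun x => (-x.2.2 - 1, -x.2.1, -x.1), fun x => by simp, fun x => by simp⟩
  rw [analyticOrderAt_doubleQPochhammer (neg_div_mem_UHP hστ) (neg_one_div_mem_UHP hσ),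
    ← Set.encard_preimage_of_bijective hbij]
  congr 1
  ext ⟨a, b, c⟩
  simp only [Set.mem_preimage, Set.mem_ofPred_eq]
  push_cast
  field_simp
  grind

lemma analyticOrderAt_doubleQPochhammer_add_sub (hτ : τ ∈ UHP) (hσ : σ ∈ UHP) (z : ℂ) :
    analyticOrderAt (doubleQPochhammer τ σ) (τ + σ - z) =
      {x : ℤ × ℤ × ℤ | x.1 + x.2.1 * τ + x.2.2 * σ = z ∧ 0 < x.2.1 ∧ 0 < x.2.2}.encard := by
  have hbij : Function.Bijective fun x : ℤ × ℤ × ℤ => (-x.1, x.2.1 - 1, x.2.2 - 1) :=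
    Function.bijective_iff_has_inverse.2
      ⟨fun x => (-x.1, x.2.1 + 1, x.2.2 + 1), fun x => by simp, fun x => by simp⟩
  rw [analyticOrderAt_doubleQPochhammer hτ hσ, ← Set.encard_preimage_of_bijective hbij]
  congr 1
  ext ⟨a, b, c⟩
  simp only [Set.mem_preimage, Set.mem_ofPred_eq]
  push_cast
  grind

lemma analyticOrderAt_threeTermProd (hτ : τ ∈ UHP) (hσ : σ ∈ UHP) (hστ : σ / τ ∈ UHP) (z : ℂ) :
    analyticOrderAt (threeTermProd τ σ) z = (threeTermZeros τ σ z).encard := by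
  rw [analyticOrderAt_threeTermProd_eq_add hτ hσ hστ,
    analyticOrderAt_doubleQPochhammer_div_left hτ hστ,
    analyticOrderAt_doubleQPochhammer_div_right hσ hστ,
    analyticOrderAt_doubleQPochhammer_add_sub hτ hσ, ← Set.encard_union_eq, ← Set.encard_union_eq]
  · congr 1
    ext x
    simp only [threeTermZeros, Set.mem_union, Set.mem_ofPred_eq]
    tauto
  all_goals
    rw [Set.disjoint_left]
    intro x
    simp only [Set.mem_union, Set.mem_ofPred_eq]
    grind

lemma bijective_reflect :
    Function.Bijective fun x : ℤ × ℤ × ℤ => (-1 - x.1, 1 - x.2.1, 1 - x.2.2) :=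
  Function.Involutive.bijective fun x => by simp

lemma mem_threeTermZeros_reflect (τ σ z : ℂ) (x : ℤ × ℤ × ℤ) :
    (-1 - x.1, 1 - x.2.1, 1 - x.2.2) ∈ threeTermZeros τ σ z ↔
      x ∈ threeTermZeros τ σ (τ + σ - 1 - z) := by
  simp only [threeTermZeros, Set.mem_ofPred_eq]
  push_cast
  grind

lemma encard_threeTermZeros_reflect (τ σ z : ℂ) :
    (threeTermZeros τ σ (τ + σ - 1 - z)).encard = (threeTermZeros τ σ z).encard := by
  rw [← Set.encard_preimage_of_bijective bijective_reflect (threeTermZeros τ σ z)]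
  exact congrArg _ (Set.ext fun x => (mem_threeTermZeros_reflect τ σ z x).symm)

lemma even_analyticOrderAt_threeTermProd_center (hτ : τ ∈ UHP) (hσ : σ ∈ UHP) (hστ : σ / τ ∈ UHP) :
    ∃ n : ℕ, analyticOrderAt (threeTermProd τ σ) ((τ + σ - 1) / 2) = n ∧ Even n := by
  set Z := threeTermZeros τ σ ((τ + σ - 1) / 2) with hZ
  have hhalf : (Z \ {x | 0 ≤ x.1}).encard = (Z ∩ {x | 0 ≤ x.1}).encard := by
    rw [← Set.encard_preimage_of_bijective bijective_reflect (Z ∩ _)]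
    congr 1
    ext x
    have hx := mem_threeTermZeros_reflect τ σ ((τ + σ - 1) / 2) x
    rw [sub_half, ← hZ] at hx
    simp only [Set.mem_preimage, Set.mem_inter_iff, Set.mem_sdiff, hx, Set.mem_ofPred_eq]
    grind
  have hne := analyticOrderAt_threeTermProd_ne_top hτ hσ hστ ((τ + σ - 1) / 2)
  have hord := analyticOrderAt_threeTermProd hτ hσ hστ ((τ + σ - 1) / 2)
  rw [← hZ, ← Set.encard_sdiff_add_encard_inter Z {x | 0 ≤ x.1}, hhalf] at hord
  rw [hord] at hne ⊢
  lift (Z ∩ {x | 0 ≤ x.1}).encard to ℕ using (WithTop.add_ne_top.1 hne).1 with n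
  exact ⟨n + n, by push_cast; rfl, n, rfl⟩

theorem threeTermProd_reflect_eq (hτ : τ ∈ UHP) (hσ : σ ∈ UHP) (hστ : σ / τ ∈ UHP) (z : ℂ) :
    threeTermProd τ σ (τ + σ - 1 - z) =
      qexp (threeTermExponent τ σ z) * threeTermProd τ σ z := by
  obtain ⟨L, hω₁, hω₂⟩ := exists_periodPair hστ
  have hdiff := differentiable_threeTermProd hτ hσ hστ
  have hexp : Differentiable ℂ (threeTermExponent τ σ) := by
    unfold threeTermExponent
    fun_prop
  obtain ⟨C, hC⟩ := eq_const_mul_qexp_mul_of_analyticOrderAt_eq L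
    (f := fun z => threeTermProd τ σ (τ + σ - 1 - z)) (by fun_prop) hdiff hexp
    (fun z => by rw [analyticOrderAt_comp_const_sub, analyticOrderAt_threeTermProd hτ hσ hστ,
      analyticOrderAt_threeTermProd hτ hσ hστ, encard_threeTermZeros_reflect])
    (analyticOrderAt_threeTermProd_ne_top hτ hσ hστ)
    (by
      rintro _ (rfl | rfl) z
      · rw [hω₁]
        exact threeTermProd_reflect_add_left hτ hσ hστ z
      · rw [hω₂]
        exact threeTermProd_reflect_add_right hτ hσ hστ z)
  obtain ⟨n, hord, hn⟩ := even_analyticOrderAt_threeTermProd_center hτ hσ hστ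
  have hcenter := eq_one_of_reflect_eq_mul_of_even_analyticOrderAt
    (h := fun z => C * qexp (threeTermExponent τ σ z)) (hdiff.analyticAt _) hord hn
    ((continuous_qexp.comp hexp.continuous).const_mul C).continuousAt
    (fun z => by rw [mul_div_cancel₀ _ two_ne_zero, hC])
  have hC1 : C = 1 := by simpa [threeTermExponent, qexp_zero] using hcenter
  rw [hC, hC1, one_mul]

lemma threeTermProd_reflect (hτ : τ ≠ 0) (hσ : σ ≠ 0) (z : ℂ) :
    threeTermProd τ σ (τ + σ - 1 - z) =
      doubleQPochhammer (-1 / τ) (σ / τ) ((σ - 1 - z) / τ) *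
        doubleQPochhammer (-(τ / σ)) (-1 / σ) ((z - τ) / σ) * doubleQPochhammer τ σ z := by
  rw [threeTermProd, ← doubleQPochhammer_add_one _ _ ((σ - 1 - z) / τ),
    ← doubleQPochhammer_add_one _ _ ((-1 - _) / σ), ← doubleQPochhammer_add_one _ _ z]
  congr 3 <;> field_simp <;> ring

end ThreeTerm

section EllipticGamma

lemma qexp_mul_add_mul_add (t s w : ℂ) (j l : ℕ) :
    qexp (j * t + l * s + w) = qexp t ^ j * qexp s ^ l * Complex.exp (2 * Real.pi * I * w) := by
  rw [qexp_add, qexp_add, qexp_natCast_mul, qexp_natCast_mul]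
  rfl

lemma EGFactorsNeZero.doubleQPochhammer_ne_zero {z t s : ℂ} (h : EGFactorsNeZero z t s)
    (ht : t ∈ UHP) (hs : s ∈ UHP) : doubleQPochhammer t s z ≠ 0 :=
  qexpProd_ne_zero (summable_norm_qexp_natCast_mul_add ht hs) fun p hp =>
    (h p.1 p.2).2 <| by rw [← qexp_mul_add_mul_add, hp, sub_self]

lemma ellipticGamma_eq_div {t s z : ℂ} (ht : t ∈ UHP) (hs : s ∈ UHP)
    (hz : doubleQPochhammer t s z ≠ 0) :
    ellipticGamma z t s = doubleQPochhammer t s (t + s - z) / doubleQPochhammer t s z := by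
  have hsum := summable_norm_qexp_natCast_mul_add ht hs
  refine (tprod_congr fun p => ?_).trans ((multipliable_one_sub_qexp hsum (t + s - z)).tprod_div₀
    (multipliable_one_sub_qexp hsum z) hz)
  have hnum : (p.1 : ℂ) * t + p.2 * s + (t + s - z) =
      (p.1 + 1 : ℕ) * t + (p.2 + 1 : ℕ) * s + -z := by
    push_cast
    ring
  rw [hnum, qexp_mul_add_mul_add, qexp_mul_add_mul_add, mul_neg, neg_mul]

theorem ellipticGamma_div_neg_one_div {τ σ z : ℂ} (hτ : τ ∈ UHP) (hσ : σ ∈ UHP)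
    (hστ : σ / τ ∈ UHP)
    (h₁ : doubleQPochhammer (-1 / τ) (σ / τ) (z / τ) ≠ 0)
    (h₂ : doubleQPochhammer (-(τ / σ)) (-1 / σ) ((z - τ) / σ) ≠ 0)
    (h₃ : doubleQPochhammer τ σ z ≠ 0) :
    ellipticGamma (z / τ) (-1 / τ) (σ / τ) =
      qexp (threeTermExponent τ σ z) * ellipticGamma ((z - τ) / σ) (-(τ / σ)) (-1 / σ) *
        ellipticGamma z τ σ := by
  have hreflect := threeTermProd_reflect_eq hτ hσ hστ z
  rw [threeTermProd_reflect (ne_zero_of_mem_UHP hτ) (ne_zero_of_mem_UHP hσ), threeTermProd]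
    at hreflect
  have hnum₁ : -1 / τ + σ / τ - z / τ = (σ - 1 - z) / τ := by ring
  have hnum₂ : -(τ / σ) + -1 / σ - (z - τ) / σ = (-1 - z) / σ := by ring
  rw [ellipticGamma_eq_div (neg_one_div_mem_UHP hτ) hστ h₁,
    ellipticGamma_eq_div (neg_div_mem_UHP hστ) (neg_one_div_mem_UHP hσ) h₂,
    ellipticGamma_eq_div hτ hσ h₃, hnum₁, hnum₂, mul_assoc, div_mul_div_comm,
    ← mul_div_assoc, div_eq_div_iff h₁ (mul_ne_zero h₂ h₃)]
  linear_combination hreflect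

/-- Numerators of the coefficients of the cubic polynomial `Q`, over the common denominator
`12 τ σ`. -/
noncomputable def threeTermCoeffNum : Fin 4 → MvPolynomial (Fin 2) ℚ :=
  let X := MvPolynomial.X 0
  let Y := MvPolynomial.X 1
  ![(X + Y - 1) * (X + Y - X * Y), 2 * (X ^ 2 + Y ^ 2 + 1 + 3 * (X * Y - X - Y)),
    -6 * (X + Y - 1), 4]

lemma qexp_threeTermExponent {τ σ : ℂ} (hτ : τ ≠ 0) (hσ : σ ≠ 0) (z : ℂ) :
    qexp (threeTermExponent τ σ z) = Complex.exp (Real.pi * I * ∑ i : Fin 4,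
      MvPolynomial.aeval ![τ, σ] (threeTermCoeffNum i) / (12 * τ * σ) * z ^ (i : ℕ)) := by
  simp only [qexp, threeTermExponent, threeTermCoeffNum, Fin.sum_univ_four]
  congr 1
  simp only [Matrix.cons_val, map_add, map_sub, map_mul, map_pow, map_neg, map_one, map_ofNat,
    MvPolynomial.aeval_X, Fin.coe_ofNat_eq_mod, Nat.reduceMod, pow_zero, pow_one]
  field_simp
  ring

end EllipticGamma

/-- modular three-term relation for the elliptic gamma function, with a
multiplier `e^{iπQ(z)}` where `Q` is a cubic polynomial whose coefficients are rational
functions of `τ` and `σ` with rational coefficients. -/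
theorem ellipticGamma_modular_three_term
    (τ σ : ℂ) (hτ : τ ∈ UHP) (hσ : σ ∈ UHP) (hστ : σ / τ ∈ UHP) :
    ∃ num den : Fin 4 → MvPolynomial (Fin 2) ℚ,
      (∀ i, MvPolynomial.aeval ![τ, σ] (den i) ≠ 0) ∧
      ∀ z : ℂ,
        EGFactorsNeZero (z / τ) (-1 / τ) (σ / τ) →
        EGFactorsNeZero ((z - τ) / σ) (-(τ / σ)) (-1 / σ) →
        EGFactorsNeZero z τ σ →
        ellipticGamma (z / τ) (-1 / τ) (σ / τ) =
          Complex.exp (Real.pi * Complex.I *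
              ∑ i : Fin 4,
                (MvPolynomial.aeval ![τ, σ] (num i) / MvPolynomial.aeval ![τ, σ] (den i)) *
                  z ^ (i : ℕ)) *
            ellipticGamma ((z - τ) / σ) (-(τ / σ)) (-1 / σ) * ellipticGamma z τ σ := by
  have hτ0 := ne_zero_of_mem_UHP hτ
  have hσ0 := ne_zero_of_mem_UHP hσ
  have hden : MvPolynomial.aeval ![τ, σ] (12 * MvPolynomial.X 0 * MvPolynomial.X 1 :
      MvPolynomial (Fin 2) ℚ) = 12 * τ * σ := by
    simp
  refine ⟨threeTermCoeffNum, fun _ => 12 * MvPolynomial.X 0 * MvPolynomial.X 1, fun _ => ?_,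
    fun z h₁ h₂ h₃ => ?_⟩
  · rw [hden]
    simp [hτ0, hσ0]
  · simp only [hden]
    rw [← qexp_threeTermExponent hτ0 hσ0]
    exact ellipticGamma_div_neg_one_div hτ hσ hστ
      (h₁.doubleQPochhammer_ne_zero (neg_one_div_mem_UHP hτ) hστ)
      (h₂.doubleQPochhammer_ne_zero (neg_div_mem_UHP hστ) (neg_one_div_mem_UHP hσ))
      (h₃.doubleQPochhammer_ne_zero hτ hσ)
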